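/- Let (S_n)_{n≥0} be a simple symmetric random walk on ℤ, independent of a stationary centered sequence (ξ_k)_{k∈ℤ} with finite fourth moments, and suppose C₂' := sup_{N≥1} N^{−2} Σ_{k₁,k₂,k₃,k₄=0}^{N−1} |E[ξ_{k₁}ξ_{k₂}ξ_{k₃}ξ_{k₄}]| < ∞. Let C₁ > 0 be a constant such that ‖N_n(k)‖_{L⁴} ≤ C₁ √n for all n ≥ 1 and all k ∈ ℤ. Then for all integers α ∈ ℤ, β ≥ 1 and n ≥ 1: E[(Σ_{ℓ=α+1}^{α+β} ξ_ℓ N_n(ℓ))⁴] ≤ C₁⁴ n² C₂' β². -/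

import Mathlib

open MeasureTheory ProbabilityTheory Filter

noncomputable section

/-- Number of visits of the walk `S` to site `k` among times `1,...,n` (local time). -/
def localTime {Ω : Type*} (S : ℕ → Ω → ℤ) (n : ℕ) (k : ℤ) (ω : Ω) : ℝ :=
  ((Finset.Icc 1 n).filter (fun j => S j ω = k)).card

/-- `S` is a simple symmetric random walk on `ℤ`: `S 0 = 0` and the increments are
i.i.d. uniform on `{-1, 1}`. -/
structure IsSSRW {Ω : Type*} [MeasurableSpace Ω] (μ : Measure Ω) (S : ℕ → Ω → ℤ) : Prop where
  meas : ∀ n, Measurable (S n)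
  init : ∀ ω, S 0 ω = 0
  indep : iIndepFun (fun n ω => S (n + 1) ω - S n ω) μ
  step_one : ∀ n, μ {ω | S (n + 1) ω - S n ω = 1} = 1 / 2
  step_neg_one : ∀ n, μ {ω | S (n + 1) ω - S n ω = -1} = 1 / 2

/-- Stationarity of the sequence `(ξ k)_{k ∈ ℤ}`: all finite dimensional distributions
are invariant under a shift of the index. -/
def IsStationarySeq {Ω : Type*} [MeasurableSpace Ω] (μ : Measure Ω) (ξ : ℤ → Ω → ℝ) : Prop :=
  ∀ (j : ℤ) (q : ℕ) (k : Fin q → ℤ),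
    Measure.map (fun ω i => ξ (k i + j) ω) μ = Measure.map (fun ω i => ξ (k i) ω) μ

/-- Covariance of two complex-valued random variables. -/
def covC {Ω : Type*} [MeasurableSpace Ω] (μ : Measure Ω) (U V : Ω → ℂ) : ℂ :=
  ∫ ω, U ω * V ω ∂μ - (∫ ω, U ω ∂μ) * (∫ ω, V ω ∂μ)

/-- Condition (3): `(ξ k)` is stationary, centered, with finite fourth moments. -/
def Cond3 {Ω : Type*} [MeasurableSpace Ω] (μ : Measure Ω) (ξ : ℤ → Ω → ℝ) : Prop :=
  IsStationarySeq μ ξ ∧ (∀ k, ∫ ω, ξ k ω ∂μ = 0) ∧ ∀ k, Integrable (fun ω => (ξ k ω) ^ 4) μ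

/-- Condition (4). -/
def Cond4 {Ω : Type*} [MeasurableSpace Ω] (μ : Measure Ω) (ξ : ℤ → Ω → ℝ) : Prop :=
  Summable (fun p : ℕ => Real.sqrt (1 + (p : ℝ)) * |∫ ω, ξ 0 ω * ξ (p : ℤ) ω ∂μ|) ∧
  ∃ B : ℝ, ∀ N : ℕ, 1 ≤ N →
    ∑ k₁ ∈ Finset.range N, ∑ k₂ ∈ Finset.range N, ∑ k₃ ∈ Finset.range N,
      ∑ k₄ ∈ Finset.range N,
        |∫ ω, ξ (k₁ : ℤ) ω * ξ (k₂ : ℤ) ω * ξ (k₃ : ℤ) ω * ξ (k₄ : ℤ) ω ∂μ| ≤ B * (N : ℝ) ^ 2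

/-- The covariance inequality of condition (5), for a given constant `C` and
family `φ`. -/
def Cond5Bound {Ω : Type*} [MeasurableSpace Ω] (μ : Measure Ω) (ξ : ℤ → Ω → ℝ)
    (C : ℝ) (φ : ℕ → ℕ → ℝ) : Prop :=
  ∀ n₁ n₂ n₃ n₄ : ℕ, n₁ ≤ n₂ → n₂ ≤ n₃ → n₃ ≤ n₄ → ∀ α β : ℕ → ℝ,
    ‖covC μ
        (fun ω => Complex.exp (Complex.I * ((∑ k ∈ Finset.Icc n₁ n₂, α k * ξ (k : ℤ) ω : ℝ) : ℂ)))
        (fun ω => Complex.exp (Complex.I * ((∑ k ∈ Finset.Icc n₃ n₄, β k * ξ (k : ℤ) ω : ℝ) : ℂ)))‖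
      ≤ C * (1 + ∑ k ∈ Finset.Icc n₁ n₂, |α k| + ∑ k ∈ Finset.Icc n₃ n₄, |β k|) *
          φ (n₃ - n₂) (n₄ - n₃)

/-- Condition (5). -/
def Cond5 {Ω : Type*} [MeasurableSpace Ω] (μ : Measure Ω) (ξ : ℤ → Ω → ℝ) : Prop :=
  ∃ C : ℝ, 0 < C ∧ ∃ (φ : ℕ → ℕ → ℝ) (r : ℕ), 1 ≤ r ∧
    (∀ p s, 0 ≤ φ p s) ∧ (∀ p s, φ (p + 1) s ≤ φ p s) ∧
    Tendsto (fun s : ℕ => Real.sqrt s * φ (r * s) s) atTop (nhds 0) ∧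
    Cond5Bound μ ξ C φ

/-- Arithmetic-geometric mean inequality for the product of four real numbers. -/
lemma abs_mul_four_le (a b c d : ℝ) :
    |a * b * c * d| ≤ (a ^ 4 + b ^ 4 + c ^ 4 + d ^ 4) / 4 := by
  rw [abs_le]
  constructor <;>
    nlinarith [sq_nonneg (a ^ 2 - b ^ 2), sq_nonneg (c ^ 2 - d ^ 2), sq_nonneg (a * b - c * d),
      sq_nonneg (a * b + c * d)]

lemma sum_pow_four {ι R : Type*} [CommSemiring R] (s : Finset ι) (f : ι → R) :
    (∑ i ∈ s, f i) ^ 4 = ∑ i ∈ s, ∑ j ∈ s, ∑ k ∈ s, ∑ l ∈ s, f i * f j * f k * f l := by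
  simp only [← Finset.mul_sum, ← Finset.sum_mul]
  ring

lemma integrable_pow_four {Ω : Type*} [MeasurableSpace Ω] {μ : Measure Ω} {f : Ω → ℝ}
    (hf : MemLp f 4 μ) : Integrable (fun ω => f ω ^ 4) μ := by
  simpa [Even.pow_abs (show Even 4 by decide)] using
    hf.integrable_norm_pow (p := 4) (by norm_num)

lemma integrable_mul_four {Ω : Type*} [MeasurableSpace Ω] {μ : Measure Ω} {f g h k : Ω → ℝ}
    (hf : MemLp f 4 μ) (hg : MemLp g 4 μ) (hh : MemLp h 4 μ) (hk : MemLp k 4 μ) :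
    Integrable (fun ω => f ω * g ω * h ω * k ω) μ := by
  refine Integrable.mono'
    (((((integrable_pow_four hf).add (integrable_pow_four hg)).add (integrable_pow_four hh)).add
      (integrable_pow_four hk)).div_const 4)
    (((hf.1.mul hg.1).mul hh.1).mul hk.1) (.of_forall fun ω => ?_)
  exact abs_mul_four_le _ _ _ _

lemma integral_pow_four_le_of_eLpNorm_le {Ω : Type*} [MeasurableSpace Ω] {μ : Measure Ω}
    {f : Ω → ℝ} (hf : MemLp f 4 μ) {c : ℝ} (hc : 0 ≤ c) (h : eLpNorm f 4 μ ≤ ENNReal.ofReal c) :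
    ∫ ω, f ω ^ 4 ∂μ ≤ c ^ 4 := by
  have hnorm := hf.eLpNorm_eq_integral_rpow_norm (by norm_num) (by norm_num)
  rw [hnorm, ENNReal.ofReal_le_ofReal_iff hc] at h
  have hpos : 0 ≤ ∫ ω, ‖f ω‖ ^ (4 : ℝ) ∂μ := integral_nonneg fun ω => by positivity
  have h4 : ((4 : ENNReal)).toReal = 4 := by norm_num
  rw [h4] at h
  have := pow_le_pow_left₀ (by positivity) h 4
  rw [← Real.rpow_natCast, ← Real.rpow_mul hpos] at this
  norm_num at this
  simpa [Even.pow_abs (show Even 4 by decide)] using this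

/-- Hölder's inequality for four functions with a common bound on their `L⁴` norms. -/
lemma abs_integral_mul_four_le {Ω : Type*} [MeasurableSpace Ω] {μ : Measure Ω}
    {f : Fin 4 → Ω → ℝ} (hf : ∀ i, MemLp (f i) 4 μ) {c : ℝ} (hc : 0 ≤ c)
    (h : ∀ i, eLpNorm (f i) 4 μ ≤ ENNReal.ofReal c) :
    |∫ ω, f 0 ω * f 1 ω * f 2 ω * f 3 ω ∂μ| ≤ c ^ 4 := by
  have pow_int (i : Fin 4) := integrable_pow_four (hf i)
  calc |∫ ω, f 0 ω * f 1 ω * f 2 ω * f 3 ω ∂μ|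
      ≤ ∫ ω, |f 0 ω * f 1 ω * f 2 ω * f 3 ω| ∂μ := abs_integral_le_integral_abs
    _ ≤ ∫ ω, (f 0 ω ^ 4 + f 1 ω ^ 4 + f 2 ω ^ 4 + f 3 ω ^ 4) / 4 ∂μ :=
        integral_mono (integrable_mul_four (hf 0) (hf 1) (hf 2) (hf 3)).abs
          (((((pow_int 0).add (pow_int 1)).add (pow_int 2)).add (pow_int 3)).div_const 4)
          fun ω => abs_mul_four_le _ _ _ _
    _ = (∫ ω, f 0 ω ^ 4 ∂μ + ∫ ω, f 1 ω ^ 4 ∂μ + ∫ ω, f 2 ω ^ 4 ∂μ + ∫ ω, f 3 ω ^ 4 ∂μ) / 4 := by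
        rw [integral_div,
          integral_add (((pow_int 0).fun_add (pow_int 1)).fun_add (pow_int 2)) (pow_int 3),
          integral_add ((pow_int 0).fun_add (pow_int 1)) (pow_int 2),
          integral_add (pow_int 0) (pow_int 1)]
    _ ≤ c ^ 4 := by
        linarith [integral_pow_four_le_of_eLpNorm_le (hf 0) hc (h 0),
          integral_pow_four_le_of_eLpNorm_le (hf 1) hc (h 1),
          integral_pow_four_le_of_eLpNorm_le (hf 2) hc (h 2),
          integral_pow_four_le_of_eLpNorm_le (hf 3) hc (h 3)]

lemma localTime_eq_sum {Ω : Type*} (S : ℕ → Ω → ℤ) (n : ℕ) (k : ℤ) (ω : Ω) :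
    localTime S n k ω = ∑ j ∈ Finset.Icc 1 n, if S j ω = k then (1 : ℝ) else 0 := by
  simp [localTime]

lemma measurable_localTime {Ω : Type*} [MeasurableSpace Ω] {S : ℕ → Ω → ℤ}
    (hS : ∀ n, Measurable (S n)) (n : ℕ) (k : ℤ) : Measurable (localTime S n k) := by
  rw [funext (localTime_eq_sum S n k)]
  exact Finset.measurable_sum _ fun j _ =>
    Measurable.ite (hS j (measurableSet_singleton k)) measurable_const measurable_const

/-- Fourth order joint moments of a stationary sequence are shift invariant. -/
lemma IsStationarySeq.integral_mul_four_shift {Ω : Type*} [MeasurableSpace Ω] {μ : Measure Ω}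
    {ξ : ℤ → Ω → ℝ} (hstat : IsStationarySeq μ ξ) (hξ : ∀ k, Measurable (ξ k))
    (j k₁ k₂ k₃ k₄ : ℤ) :
    ∫ ω, ξ (k₁ + j) ω * ξ (k₂ + j) ω * ξ (k₃ + j) ω * ξ (k₄ + j) ω ∂μ =
      ∫ ω, ξ k₁ ω * ξ k₂ ω * ξ k₃ ω * ξ k₄ ω ∂μ := by
  have hF : Measurable fun x : Fin 4 → ℝ => x 0 * x 1 * x 2 * x 3 := by fun_prop
  have hmap := congrArg (fun ν => ∫ x, x 0 * x 1 * x 2 * x 3 ∂ν) (hstat j 4 ![k₁, k₂, k₃, k₄])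
  rw [integral_map (measurable_pi_lambda _ fun i => hξ _).aemeasurable hF.aestronglyMeasurable,
    integral_map (measurable_pi_lambda _ fun i => hξ _).aemeasurable
      hF.aestronglyMeasurable] at hmap
  simpa using hmap

lemma sum_Icc_eq_sum_range_shift {M : Type*} [AddCommMonoid M] (f : ℤ → M) (α : ℤ) (N : ℕ) :
    ∑ ℓ ∈ Finset.Icc (α + 1) (α + N), f ℓ = ∑ k ∈ Finset.range N, f (k + (α + 1)) := by
  symm
  refine Finset.sum_bij (fun k _ => (k : ℤ) + (α + 1)) ?_ ?_ ?_ fun _ _ => rfl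
  · intro k hk
    simp only [Finset.mem_range, Finset.mem_Icc] at hk ⊢
    omega
  · intro a _ b _ h
    omega
  · intro b hb
    rw [Finset.mem_Icc] at hb
    exact ⟨(b - (α + 1)).toNat, by rw [Finset.mem_range]; omega, by omega⟩

/-- Fourth-moment bound for weighted local-time sums. -/
theorem statement2 {Ω : Type*} [MeasurableSpace Ω] (μ : Measure Ω) [IsProbabilityMeasure μ]
    (S : ℕ → Ω → ℤ) (ξ : ℤ → Ω → ℝ)
    (hS : IsSSRW μ S)
    (hξmeas : ∀ k, Measurable (ξ k))
    (hindep : IndepFun (fun ω (n : ℕ) => S n ω) (fun ω (k : ℤ) => ξ k ω) μ)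
    (hstat : IsStationarySeq μ ξ)
    (hcent : ∀ k, ∫ ω, ξ k ω ∂μ = 0)
    (hL4 : ∀ k, MemLp (ξ k) 4 μ)
    (C₂' : ℝ)
    (hC₂' : ∀ N : ℕ, 1 ≤ N →
      ∑ k₁ ∈ Finset.range N, ∑ k₂ ∈ Finset.range N, ∑ k₃ ∈ Finset.range N,
        ∑ k₄ ∈ Finset.range N,
          |∫ ω, ξ (k₁ : ℤ) ω * ξ (k₂ : ℤ) ω * ξ (k₃ : ℤ) ω * ξ (k₄ : ℤ) ω ∂μ| ≤ C₂' * (N : ℝ) ^ 2)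
    (C₁ : ℝ) (hC₁ : 0 < C₁)
    (hN : ∀ n : ℕ, 1 ≤ n → ∀ k : ℤ,
      eLpNorm (localTime S n k) 4 μ ≤ ENNReal.ofReal (C₁ * Real.sqrt n))
    (α : ℤ) (β : ℤ) (hβ : 1 ≤ β) (n : ℕ) (hn : 1 ≤ n) :
    ∫ ω, (∑ ℓ ∈ Finset.Icc (α + 1) (α + β), ξ ℓ ω * localTime S n ℓ ω) ^ 4 ∂μ ≤
      C₁ ^ 4 * (n : ℝ) ^ 2 * C₂' * (β : ℝ) ^ 2 := by
  obtain ⟨N, rfl⟩ := Int.eq_ofNat_of_zero_le (by omega : 0 ≤ β)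
  have hc : 0 ≤ C₁ * Real.sqrt n := by positivity
  have hLmem (k : ℤ) : MemLp (localTime S n k) 4 μ :=
    ⟨(measurable_localTime hS.meas n k).aestronglyMeasurable,
      (hN n hn k).trans_lt ENNReal.ofReal_lt_top⟩
  have hsplit (a b c d : ℤ) :
      IndepFun (fun ω => ξ a ω * ξ b ω * ξ c ω * ξ d ω)
        (fun ω => localTime S n a ω * localTime S n b ω * localTime S n c ω * localTime S n d ω)
        μ := by
    have hL (k : ℤ) : Measurable (localTime (fun j (s : ℕ → ℤ) => s j) n k) :=
      measurable_localTime (fun j => measurable_pi_apply j) n k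
    exact hindep.symm.comp
      (φ := fun x : ℤ → ℝ => x a * x b * x c * x d)
      (ψ := fun s : ℕ → ℤ => localTime (fun j (s : ℕ → ℤ) => s j) n a s *
        localTime (fun j (s : ℕ → ℤ) => s j) n b s * localTime (fun j (s : ℕ → ℤ) => s j) n c s *
        localTime (fun j (s : ℕ → ℤ) => s j) n d s)
      (by fun_prop) ((((hL a).mul (hL b)).mul (hL c)).mul (hL d))
  have hrearrange (a b c d : ℤ) (ω : Ω) :
      ξ a ω * localTime S n a ω * (ξ b ω * localTime S n b ω) * (ξ c ω * localTime S n c ω) *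
          (ξ d ω * localTime S n d ω) =
        ξ a ω * ξ b ω * ξ c ω * ξ d ω *
          (localTime S n a ω * localTime S n b ω * localTime S n c ω * localTime S n d ω) := by
    ring
  have hint (a b c d : ℤ) : Integrable (fun ω =>
      ξ a ω * localTime S n a ω * (ξ b ω * localTime S n b ω) * (ξ c ω * localTime S n c ω) *
        (ξ d ω * localTime S n d ω)) μ := by
    simp only [hrearrange]
    exact (hsplit a b c d).integrable_mul
      (integrable_mul_four (hL4 a) (hL4 b) (hL4 c) (hL4 d))
      (integrable_mul_four (hLmem a) (hLmem b) (hLmem c) (hLmem d))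
  have hbound (a b c d : ℤ) :
      ∫ ω, ξ a ω * localTime S n a ω * (ξ b ω * localTime S n b ω) *
          (ξ c ω * localTime S n c ω) * (ξ d ω * localTime S n d ω) ∂μ ≤
        (C₁ * Real.sqrt n) ^ 4 * |∫ ω, ξ a ω * ξ b ω * ξ c ω * ξ d ω ∂μ| := by
    simp only [hrearrange]
    rw [(hsplit a b c d).integral_fun_mul_eq_mul_integral
      (integrable_mul_four (hL4 a) (hL4 b) (hL4 c) (hL4 d)).1
      (integrable_mul_four (hLmem a) (hLmem b) (hLmem c) (hLmem d)).1]
    refine (le_abs_self _).trans ?_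
    rw [abs_mul, mul_comm]
    gcongr
    exact abs_integral_mul_four_le (f := fun i => localTime S n (![a, b, c, d] i))
      (fun i => hLmem _) hc fun i => hN n hn _
  have hsqrt : (C₁ * Real.sqrt n) ^ 4 = C₁ ^ 4 * (n : ℝ) ^ 2 := by
    rw [mul_pow, show Real.sqrt n ^ 4 = (Real.sqrt n ^ 2) ^ 2 by ring,
      Real.sq_sqrt n.cast_nonneg]
  simp only [sum_Icc_eq_sum_range_shift, sum_pow_four]
  rw [integral_finsetSum _ fun i _ => integrable_finsetSum _ fun j _ =>
    integrable_finsetSum _ fun k _ => integrable_finsetSum _ fun l _ => hint _ _ _ _]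
  have hexpand (i : ℕ) : ∫ ω, ∑ j ∈ Finset.range N, ∑ k ∈ Finset.range N, ∑ l ∈ Finset.range N,
        ξ (i + (α + 1)) ω * localTime S n (i + (α + 1)) ω *
          (ξ (j + (α + 1)) ω * localTime S n (j + (α + 1)) ω) *
          (ξ (k + (α + 1)) ω * localTime S n (k + (α + 1)) ω) *
          (ξ (l + (α + 1)) ω * localTime S n (l + (α + 1)) ω) ∂μ ≤
      ∑ j ∈ Finset.range N, ∑ k ∈ Finset.range N, ∑ l ∈ Finset.range N,
        (C₁ * Real.sqrt n) ^ 4 * |∫ ω, ξ i ω * ξ j ω * ξ k ω * ξ l ω ∂μ| := by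
    rw [integral_finsetSum _ fun j _ => integrable_finsetSum _ fun k _ =>
      integrable_finsetSum _ fun l _ => hint _ _ _ _]
    refine Finset.sum_le_sum fun j _ => ?_
    rw [integral_finsetSum _ fun k _ => integrable_finsetSum _ fun l _ => hint _ _ _ _]
    refine Finset.sum_le_sum fun k _ => ?_
    rw [integral_finsetSum _ fun l _ => hint _ _ _ _]
    refine Finset.sum_le_sum fun l _ => (hbound _ _ _ _).trans_eq ?_
    rw [hstat.integral_mul_four_shift hξmeas]
  refine (Finset.sum_le_sum fun i _ => hexpand i).trans ?_
  simp only [← Finset.mul_sum]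
  calc _ ≤ (C₁ * Real.sqrt n) ^ 4 * (C₂' * (N : ℝ) ^ 2) := by
        gcongr
        exact hC₂' N (by omega)
    _ = _ := by rw [hsqrt]; push_cast; ring
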